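/- Let μ₁, μ₂, ρ₁, ρ₂ > 0. Then r₂ᵃ(z) ≠ 0 for every z ∈ ℂ with Re z ≥ 0. -/

import Mathlib

/-!
If `z` lies in the closed first quadrant, then so do `ω - 1` and `ω²` for both roots `ω`. Regrouping
the first summand, `r₂ᵃ(z)` becomes a nonnegative combination of products of two points of the
quadrant, whose imaginary parts are nonnegative, and of `ω₁ - 1` and `ω₂ - 1` with positive
coefficients. If it vanishes, taking imaginary parts therefore forces `ω₁` and `ω₂` to be real; but
for real `ω₁, ω₂ ≥ 1` all summands are nonnegative and the cubic ones are positive. The fourth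
quadrant follows by conjugation.
-/

open Complex

/-- `ω(z) = (1 + ρ z/μ)^{1/2}`, principal branch. -/
noncomputable def omegaSym (μ ρ : ℝ) (z : ℂ) : ℂ :=
  (1 + (ρ : ℂ) * z / (μ : ℂ)) ^ ((1 : ℂ)/2)

/-- The reduced Lopatinskii determinant `r₂ᵃ` arising from the symbol of `S_λ^{11}`. -/
noncomputable def r2aSym (μ₁ μ₂ ρ₁ ρ₂ : ℝ) (z : ℂ) : ℂ :=
  (((ρ₂ : ℂ)/(ρ₁ : ℂ)) * omegaSym μ₁ ρ₁ z + ((ρ₁ : ℂ)/(ρ₂ : ℂ)) * omegaSym μ₂ ρ₂ z) *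
      (omegaSym μ₁ ρ₁ z + 1) * (omegaSym μ₂ ρ₂ z + 1)
  + 2 * (omegaSym μ₁ ρ₁ z - 1) * (omegaSym μ₂ ρ₂ z - 1)
  + 2 * (((μ₂ : ℂ) * (ρ₁ : ℂ))/((μ₁ : ℂ) * (ρ₂ : ℂ))) * (omegaSym μ₂ ρ₂ z - 1)
  + 2 * (((μ₁ : ℂ) * (ρ₂ : ℂ))/((μ₂ : ℂ) * (ρ₁ : ℂ))) * (omegaSym μ₁ ρ₁ z - 1)
  + (((μ₂ : ℂ) * (ρ₁ : ℂ))/((μ₁ : ℂ) * (ρ₂ : ℂ))) *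
      ((omegaSym μ₂ ρ₂ z ^ 2 + 1) * (omegaSym μ₂ ρ₂ z + 1))
  + (((μ₁ : ℂ) * (ρ₂ : ℂ))/((μ₂ : ℂ) * (ρ₁ : ℂ))) *
      ((omegaSym μ₁ ρ₁ z ^ 2 + 1) * (omegaSym μ₁ ρ₁ z + 1))

open scoped ComplexConjugate

/-- The closed first quadrant of the complex plane, where the numbers whose products make up `r₂ᵃ`
lie. It is encoded as an additive submonoid, so that membership of sums is `add_mem`. -/
def firstQuadrant : AddSubmonoid ℂ where
  carrier := {w | 0 ≤ w.re ∧ 0 ≤ w.im}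
  zero_mem' := by simp
  add_mem' hw hw' := ⟨add_nonneg hw.1 hw'.1, add_nonneg hw.2 hw'.2⟩

lemma mem_firstQuadrant {w : ℂ} : w ∈ firstQuadrant ↔ 0 ≤ w.re ∧ 0 ≤ w.im :=
  Iff.rfl

lemma one_mem_firstQuadrant : (1 : ℂ) ∈ firstQuadrant := by
  simp [mem_firstQuadrant]

lemma im_mul_nonneg_of_mem_firstQuadrant {p q : ℂ} (hp : p ∈ firstQuadrant)
    (hq : q ∈ firstQuadrant) : 0 ≤ (p * q).im := by
  rw [mul_im]
  exact add_nonneg (mul_nonneg hp.1 hq.2) (mul_nonneg hp.2 hq.1)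

lemma ofReal_mul_mem_firstQuadrant {t : ℝ} (ht : 0 ≤ t) {w : ℂ} (hw : w ∈ firstQuadrant) :
    (t : ℂ) * w ∈ firstQuadrant := by
  rw [mem_firstQuadrant, re_ofReal_mul, im_ofReal_mul]
  exact ⟨mul_nonneg ht hw.1, mul_nonneg ht hw.2⟩

lemma mem_firstQuadrant_of_sub_one_mem {w : ℂ} (hw : w - 1 ∈ firstQuadrant) :
    w ∈ firstQuadrant := by
  simpa using add_mem hw one_mem_firstQuadrant

lemma cpow_inv_two_sub_one_mem_firstQuadrant {w : ℂ} (hw : w - 1 ∈ firstQuadrant) :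
    w ^ (2⁻¹ : ℂ) - 1 ∈ firstQuadrant := by
  obtain ⟨hre, him⟩ : 1 ≤ w.re ∧ 0 ≤ w.im := by simpa [mem_firstQuadrant] using hw
  have hnorm : w.re ≤ ‖w‖ := re_le_norm w
  rw [mem_firstQuadrant, sub_re, sub_im, cpow_inv_two_re, cpow_inv_two_im_eq_sqrt him, one_re,
    one_im, sub_zero, sub_nonneg, Real.one_le_sqrt]
  exact ⟨by linarith, Real.sqrt_nonneg _⟩

lemma omegaSym_eq_cpow_inv_two (μ ρ : ℝ) (z : ℂ) :
    omegaSym μ ρ z = (1 + ((ρ / μ : ℝ) : ℂ) * z) ^ (2⁻¹ : ℂ) := by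
  rw [omegaSym, one_div, ofReal_div, mul_div_right_comm]

lemma omegaSym_sq (μ ρ : ℝ) (z : ℂ) : omegaSym μ ρ z ^ 2 = 1 + ((ρ / μ : ℝ) : ℂ) * z := by
  rw [omegaSym_eq_cpow_inv_two, cpow_ofNat_inv_pow]

lemma omegaSym_sub_one_mem_firstQuadrant {μ ρ : ℝ} (h : 0 ≤ ρ / μ) {z : ℂ}
    (hz : z ∈ firstQuadrant) : omegaSym μ ρ z - 1 ∈ firstQuadrant := by
  rw [omegaSym_eq_cpow_inv_two]
  apply cpow_inv_two_sub_one_mem_firstQuadrant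
  simpa only [add_sub_cancel_left] using ofReal_mul_mem_firstQuadrant h hz

lemma omegaSym_sq_mem_firstQuadrant {μ ρ : ℝ} (h : 0 ≤ ρ / μ) {z : ℂ}
    (hz : z ∈ firstQuadrant) : omegaSym μ ρ z ^ 2 ∈ firstQuadrant := by
  rw [omegaSym_sq]
  exact add_mem one_mem_firstQuadrant (ofReal_mul_mem_firstQuadrant h hz)

lemma omegaSym_conj {μ ρ : ℝ} (h : 0 ≤ ρ / μ) {z : ℂ} (hz : 0 ≤ z.re) :
    omegaSym μ ρ (conj z) = conj (omegaSym μ ρ z) := by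
  have hre : 0 < (1 + ((ρ / μ : ℝ) : ℂ) * z).re := by
    rw [add_re, one_re, re_ofReal_mul]
    positivity
  have harg : (1 + ((ρ / μ : ℝ) : ℂ) * z).arg ≠ Real.pi :=
    slitPlane_arg_ne_pi (mem_slitPlane_iff.2 (.inl hre))
  have hconj : conj (1 + ((ρ / μ : ℝ) : ℂ) * z) = 1 + ((ρ / μ : ℝ) : ℂ) * conj z := by
    rw [map_add, map_one, map_mul, conj_ofReal]
  rw [omegaSym_eq_cpow_inv_two, omegaSym_eq_cpow_inv_two, ← hconj, conj_cpow _ _ harg, map_inv₀,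
    conj_ofNat]

lemma r2aSym_conj {μ₁ μ₂ ρ₁ ρ₂ : ℝ} (h₁ : 0 ≤ ρ₁ / μ₁) (h₂ : 0 ≤ ρ₂ / μ₂) {z : ℂ}
    (hz : 0 ≤ z.re) : r2aSym μ₁ μ₂ ρ₁ ρ₂ (conj z) = conj (r2aSym μ₁ μ₂ ρ₁ ρ₂ z) := by
  simp only [r2aSym, omegaSym_conj h₁ hz, omegaSym_conj h₂ hz, map_add, map_sub, map_mul, map_div₀,
    map_pow, map_one, conj_ofReal, conj_ofNat]

/-- The reduced Lopatinskii determinant as a polynomial in the roots `u = ω₁` and `v = ω₂`, with the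
coefficients `a = ρ₂/ρ₁`, `b = ρ₁/ρ₂`, `c = μ₂ρ₁/(μ₁ρ₂)` and `d = μ₁ρ₂/(μ₂ρ₁)` left arbitrary. -/
def lopatinskiiPoly (a b c d : ℝ) (u v : ℂ) : ℂ :=
  (a * u + b * v) * (u + 1) * (v + 1) + 2 * (u - 1) * (v - 1)
    + 2 * c * (v - 1) + 2 * d * (u - 1)
    + c * ((v ^ 2 + 1) * (v + 1)) + d * ((u ^ 2 + 1) * (u + 1))

lemma r2aSym_eq_lopatinskiiPoly (μ₁ μ₂ ρ₁ ρ₂ : ℝ) (z : ℂ) :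
    r2aSym μ₁ μ₂ ρ₁ ρ₂ z =
      lopatinskiiPoly (ρ₂ / ρ₁) (ρ₁ / ρ₂) (μ₂ * ρ₁ / (μ₁ * ρ₂)) (μ₁ * ρ₂ / (μ₂ * ρ₁))
        (omegaSym μ₁ ρ₁ z) (omegaSym μ₂ ρ₂ z) := by
  simp only [r2aSym, lopatinskiiPoly, ofReal_div, ofReal_mul]

section LopatinskiiPoly

variable {a b c d : ℝ}

lemma le_im_lopatinskiiPoly (ha : 0 ≤ a) (hb : 0 ≤ b) (hc : 0 ≤ c) (hd : 0 ≤ d) {u v : ℂ}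
    (hu : u - 1 ∈ firstQuadrant) (hu2 : u ^ 2 ∈ firstQuadrant)
    (hv : v - 1 ∈ firstQuadrant) (hv2 : v ^ 2 ∈ firstQuadrant) :
    2 * c * v.im + 2 * d * u.im ≤ (lopatinskiiPoly a b c d u v).im := by
  have h1 := one_mem_firstQuadrant
  have hu0 := mem_firstQuadrant_of_sub_one_mem hu
  have hv0 := mem_firstQuadrant_of_sub_one_mem hv
  have regroup : (lopatinskiiPoly a b c d u v).im =
      a * ((u ^ 2 + u) * (v + 1)).im + b * ((v ^ 2 + v) * (u + 1)).im
        + 2 * ((u - 1) * (v - 1)).im + 2 * c * v.im + 2 * d * u.im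
        + c * ((v ^ 2 + 1) * (v + 1)).im + d * ((u ^ 2 + 1) * (u + 1)).im := by
    simp only [lopatinskiiPoly, pow_two, add_re, add_im, sub_re, sub_im, mul_re, mul_im, ofReal_re,
      ofReal_im, one_re, one_im, re_ofNat, im_ofNat]
    ring
  have huv : 0 ≤ a * ((u ^ 2 + u) * (v + 1)).im :=
    mul_nonneg ha (im_mul_nonneg_of_mem_firstQuadrant (add_mem hu2 hu0) (add_mem hv0 h1))
  have hvu : 0 ≤ b * ((v ^ 2 + v) * (u + 1)).im :=
    mul_nonneg hb (im_mul_nonneg_of_mem_firstQuadrant (add_mem hv2 hv0) (add_mem hu0 h1))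
  have hsub : 0 ≤ ((u - 1) * (v - 1)).im := im_mul_nonneg_of_mem_firstQuadrant hu hv
  have hvvv : 0 ≤ c * ((v ^ 2 + 1) * (v + 1)).im :=
    mul_nonneg hc (im_mul_nonneg_of_mem_firstQuadrant (add_mem hv2 h1) (add_mem hv0 h1))
  have huuu : 0 ≤ d * ((u ^ 2 + 1) * (u + 1)).im :=
    mul_nonneg hd (im_mul_nonneg_of_mem_firstQuadrant (add_mem hu2 h1) (add_mem hu0 h1))
  linarith

lemma lopatinskiiPoly_ofReal_ne_zero (ha : 0 ≤ a) (hb : 0 ≤ b) (hc : 0 < c) (hd : 0 ≤ d) {u v : ℝ}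
    (hu : 1 ≤ u) (hv : 1 ≤ v) : lopatinskiiPoly a b c d u v ≠ 0 := by
  have hprod : 0 ≤ (a * u + b * v) * (u + 1) * (v + 1) := by positivity
  have hsub : 0 ≤ (u - 1) * (v - 1) := mul_nonneg (sub_nonneg.2 hu) (sub_nonneg.2 hv)
  have hv_linear : 0 ≤ c * (v - 1) := mul_nonneg hc.le (sub_nonneg.2 hv)
  have hu_linear : 0 ≤ d * (u - 1) := mul_nonneg hd (sub_nonneg.2 hu)
  have hv_cubic : 0 < c * ((v ^ 2 + 1) * (v + 1)) := by positivity
  have hu_cubic : 0 ≤ d * ((u ^ 2 + 1) * (u + 1)) := by positivity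
  rw [lopatinskiiPoly]
  norm_cast
  exact ne_of_gt (by linarith)

lemma lopatinskiiPoly_ne_zero (ha : 0 ≤ a) (hb : 0 ≤ b) (hc : 0 < c) (hd : 0 < d) {u v : ℂ}
    (hu : u - 1 ∈ firstQuadrant) (hu2 : u ^ 2 ∈ firstQuadrant)
    (hv : v - 1 ∈ firstQuadrant) (hv2 : v ^ 2 ∈ firstQuadrant) :
    lopatinskiiPoly a b c d u v ≠ 0 := by
  intro h0
  obtain ⟨hu_re, hu_im⟩ : 1 ≤ u.re ∧ 0 ≤ u.im := by simpa [mem_firstQuadrant] using hu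
  obtain ⟨hv_re, hv_im⟩ : 1 ≤ v.re ∧ 0 ≤ v.im := by simpa [mem_firstQuadrant] using hv
  have hle : 2 * c * v.im + 2 * d * u.im ≤ 0 := by
    simpa only [h0, zero_im] using le_im_lopatinskiiPoly ha hb hc.le hd.le hu hu2 hv hv2
  have hu_real : u.im = 0 := by nlinarith
  have hv_real : v.im = 0 := by nlinarith
  lift u to ℝ using hu_real
  lift v to ℝ using hv_real
  exact lopatinskiiPoly_ofReal_ne_zero ha hb hc hd.le hu_re hv_re h0

end LopatinskiiPoly

lemma r2aSym_ne_zero_of_mem_firstQuadrant {μ₁ μ₂ ρ₁ ρ₂ : ℝ}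
    (hμ₁ : 0 < μ₁) (hμ₂ : 0 < μ₂) (hρ₁ : 0 < ρ₁) (hρ₂ : 0 < ρ₂) {z : ℂ} (hz : z ∈ firstQuadrant) :
    r2aSym μ₁ μ₂ ρ₁ ρ₂ z ≠ 0 := by
  have h₁ : 0 ≤ ρ₁ / μ₁ := by positivity
  have h₂ : 0 ≤ ρ₂ / μ₂ := by positivity
  rw [r2aSym_eq_lopatinskiiPoly]
  exact lopatinskiiPoly_ne_zero (by positivity) (by positivity) (by positivity) (by positivity)
    (omegaSym_sub_one_mem_firstQuadrant h₁ hz) (omegaSym_sq_mem_firstQuadrant h₁ hz)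
    (omegaSym_sub_one_mem_firstQuadrant h₂ hz) (omegaSym_sq_mem_firstQuadrant h₂ hz)

/-- `r₂ᵃ(z) ≠ 0` for `Re z ≥ 0`. -/
theorem r2a_ne_zero (μ₁ μ₂ ρ₁ ρ₂ : ℝ)
    (hμ₁ : 0 < μ₁) (hμ₂ : 0 < μ₂) (hρ₁ : 0 < ρ₁) (hρ₂ : 0 < ρ₂) :
    ∀ z : ℂ, 0 ≤ z.re → r2aSym μ₁ μ₂ ρ₁ ρ₂ z ≠ 0 := by
  intro z hz
  rcases le_total 0 z.im with him | him
  · exact r2aSym_ne_zero_of_mem_firstQuadrant hμ₁ hμ₂ hρ₁ hρ₂ ⟨hz, him⟩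
  · have hconj : conj z ∈ firstQuadrant := by simpa [mem_firstQuadrant] using ⟨hz, him⟩
    have hne := r2aSym_ne_zero_of_mem_firstQuadrant hμ₁ hμ₂ hρ₁ hρ₂ hconj
    rwa [r2aSym_conj (by positivity) (by positivity) hz, map_ne_zero] at hne
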